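/- Let λ, μ ∈ Λ(n) be linked regular weights with λ ⊴ μ. Then every standard tableau t ∈ Std_λ(μ) satisfies w(t) ≤ ℓ(w_λ) − ℓ(w_μ), and hence deg t ≤ ℓ(w_λ) − ℓ(w_μ) + 1. -/

import Mathlib

/-!
By comparing residues, a path `p_t` with the residue sequence of `t^λ` can be at a wall at time
`j < n` only if the path `p_{t^λ}` is at a wall at time `j` too (`wall_transfer`).  The path of
`t^λ` zigzags between `0` and `1`, where there are no walls, and then runs straight away from the
origin (`domCol_step`), so it leaves every wall it meets in the outward direction.

Extend `ℓ` to all integers by counting the walls strictly between the integer and the fundamental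
alcove, and let `w_j` be the number of crossings of the fundamental alcove by `p_t` that *start*
before time `j`.  Then `ℓ(p_t(j)) + w_j ≤ ℓ(p_{t^λ}(j))` for all `j ≤ n`, by induction on `j`
(`potential_le`):
* away from a wall, `ℓ(p_t)` does not increase, `w_j` is constant, and `ℓ(p_{t^λ})` does not
  decrease;
* at a wall, `ℓ(p_{t^λ})` increases by one, while `ℓ(p_t) + w_j` increases by at most one:
  either a crossing starts and `ℓ(p_t)` stays `0`, or `w_j` is constant.

At `j = n` this is `ℓ(w_μ) + w(t) ≤ ℓ(w_λ)`, and the bound on the degree follows from `δ(t) ≤ 1`.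
-/

/-!
Common setup: a KLR-style presentation of the (doubly critical) blob algebra
`B_n^κ`, together with the combinatorics of one-column bipartitions,
standard tableaux (encoded by their column words), residue sequences, paths,
walls, degrees, the infinite dihedral group, diamonds, and cellular elements.
-/

noncomputable section

namespace Blob

/-- Generators of the blob algebra presentation: `ψ_r`, `y_r` and the
idempotents `e(i)` for residue sequences `i ∈ Iⁿ`, where `I = ℤ/eℤ`. -/
inductive Gen (n e : ℕ) : Type
  | psi (r : ℕ) : Gen n e
  | y (r : ℕ) : Gen n e
  | idem (i : Fin n → ZMod e) : Gen n e

variable (𝕜 : Type) [Field 𝕜]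

/-- The free algebra on the generators. -/
abbrev FA (𝕜 : Type) [Field 𝕜] (n e : ℕ) : Type := FreeAlgebra 𝕜 (Gen n e)

variable {n e : ℕ}

/-- The generator `ψ_r` in the free algebra. -/
def Ψ (r : ℕ) : FA 𝕜 n e := FreeAlgebra.ι 𝕜 (Gen.psi r)

/-- The generator `y_r` in the free algebra. -/
def Yg (r : ℕ) : FA 𝕜 n e := FreeAlgebra.ι 𝕜 (Gen.y r)

/-- The generator `e(i)` in the free algebra. -/
def Eg (i : Fin n → ZMod e) : FA 𝕜 n e := FreeAlgebra.ι 𝕜 (Gen.idem i)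

/-- The entry in (1-based) position `p` of a residue sequence `i ∈ Iⁿ`. -/
def ent (i : Fin n → ZMod e) (p : ℕ) : ZMod e :=
  if h : p - 1 < n then i ⟨p - 1, h⟩ else 0

/-- `s_r · i`: swap the entries of `i` in (1-based) positions `r` and `r+1`. -/
def swapRes (r : ℕ) (i : Fin n → ZMod e) : Fin n → ZMod e :=
  if h : 1 ≤ r ∧ r < n then i ∘ (Equiv.swap ⟨r - 1, by omega⟩ ⟨r, h.2⟩) else i

/-- The defining relations of the blob algebra `B_n^κ`.
(Out-of-range generators are set to `0`, so the quotient is exactly the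
algebra on the generators `ψ_1,…,ψ_{n-1}`, `y_1,…,y_n`, `e(i)`.) -/
inductive blobRel (κ : ZMod e × ZMod e) : FA 𝕜 n e → FA 𝕜 n e → Prop
  | psi_zero {r : ℕ} (h : ¬(1 ≤ r ∧ r + 1 ≤ n)) : blobRel κ (Ψ 𝕜 r) 0
  | y_zero {r : ℕ} (h : ¬(1 ≤ r ∧ r ≤ n)) : blobRel κ (Yg 𝕜 r) 0
  | idem_mul {i j : Fin n → ZMod e} :
      blobRel κ (Eg 𝕜 i * Eg 𝕜 j) (if i = j then Eg 𝕜 i else 0)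
  | idem_sum {s : Finset (Fin n → ZMod e)} (h : ∀ x, x ∈ s) :
      blobRel κ (∑ i ∈ s, Eg 𝕜 i) 1
  | y_idem {r : ℕ} {i : Fin n → ZMod e} :
      blobRel κ (Yg 𝕜 r * Eg 𝕜 i) (Eg 𝕜 i * Yg 𝕜 r)
  | psi_idem {r : ℕ} {i : Fin n → ZMod e} :
      blobRel κ (Ψ 𝕜 r * Eg 𝕜 i) (Eg 𝕜 (swapRes r i) * Ψ 𝕜 r)
  | y_y {r s : ℕ} : blobRel κ (Yg 𝕜 r * Yg 𝕜 s) (Yg 𝕜 s * Yg 𝕜 r)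
  | psi_y {r s : ℕ} (h1 : s ≠ r) (h2 : s ≠ r + 1) :
      blobRel κ (Ψ 𝕜 r * Yg 𝕜 s) (Yg 𝕜 s * Ψ 𝕜 r)
  | psi_psi {r s : ℕ} (h : r + 1 < s ∨ s + 1 < r) :
      blobRel κ (Ψ 𝕜 r * Ψ 𝕜 s) (Ψ 𝕜 s * Ψ 𝕜 r)
  | psi_y_slide {r : ℕ} {i : Fin n → ZMod e} (h1 : 1 ≤ r) (h2 : r + 1 ≤ n) :
      blobRel κ (Ψ 𝕜 r * Yg 𝕜 (r + 1) * Eg 𝕜 i)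
        ((Yg 𝕜 r * Ψ 𝕜 r - if ent i r = ent i (r + 1) then 1 else 0) * Eg 𝕜 i)
  | y_psi_slide {r : ℕ} {i : Fin n → ZMod e} (h1 : 1 ≤ r) (h2 : r + 1 ≤ n) :
      blobRel κ (Yg 𝕜 (r + 1) * Ψ 𝕜 r * Eg 𝕜 i)
        ((Ψ 𝕜 r * Yg 𝕜 r - if ent i r = ent i (r + 1) then 1 else 0) * Eg 𝕜 i)
  | quad {r : ℕ} {i : Fin n → ZMod e} (h1 : 1 ≤ r) (h2 : r + 1 ≤ n) :
      blobRel κ (Ψ 𝕜 r * Ψ 𝕜 r * Eg 𝕜 i)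
        (if ent i (r + 1) = ent i r then 0
         else if ent i (r + 1) = ent i r + 1 then (Yg 𝕜 (r + 1) - Yg 𝕜 r) * Eg 𝕜 i
         else if ent i (r + 1) = ent i r - 1 then (Yg 𝕜 r - Yg 𝕜 (r + 1)) * Eg 𝕜 i
         else Eg 𝕜 i)
  | braid {r : ℕ} {i : Fin n → ZMod e} (h1 : 1 ≤ r) (h2 : r + 2 ≤ n) :
      blobRel κ (Ψ 𝕜 r * Ψ 𝕜 (r + 1) * Ψ 𝕜 r * Eg 𝕜 i)
        (if ent i (r + 2) = ent i r ∧ ent i r = ent i (r + 1) - 1 then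
            (Ψ 𝕜 (r + 1) * Ψ 𝕜 r * Ψ 𝕜 (r + 1) - 1) * Eg 𝕜 i
         else if ent i (r + 2) = ent i r ∧ ent i r = ent i (r + 1) + 1 then
            (Ψ 𝕜 (r + 1) * Ψ 𝕜 r * Ψ 𝕜 (r + 1) + 1) * Eg 𝕜 i
         else Ψ 𝕜 (r + 1) * Ψ 𝕜 r * Ψ 𝕜 (r + 1) * Eg 𝕜 i)
  | cyclo {i : Fin n → ZMod e} (h : ent i 1 = κ.1 ∨ ent i 1 = κ.2) :
      blobRel κ (Yg 𝕜 1 * Eg 𝕜 i) 0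
  | blob {i : Fin n → ZMod e} (h1 : 2 ≤ n) (h2 : ent i 2 = ent i 1 + 1) :
      blobRel κ (Eg 𝕜 i) 0

/-- The blob algebra `B_n^κ`. -/
abbrev BA (𝕜 : Type) [Field 𝕜] (n e : ℕ) (κ : ZMod e × ZMod e) : Type :=
  RingQuot (blobRel 𝕜 (n := n) κ)

variable (κ : ZMod e × ZMod e)

/-- The generator `ψ_r` of `B_n^κ`. -/
def bpsi (r : ℕ) : BA 𝕜 n e κ := RingQuot.mkAlgHom 𝕜 (blobRel 𝕜 (n := n) κ) (Ψ 𝕜 r)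

/-- The generator `y_r` of `B_n^κ`. -/
def bY (r : ℕ) : BA 𝕜 n e κ := RingQuot.mkAlgHom 𝕜 (blobRel 𝕜 (n := n) κ) (Yg 𝕜 r)

/-- The idempotent generator `e(i)` of `B_n^κ`. -/
def bE (i : Fin n → ZMod e) : BA 𝕜 n e κ :=
  RingQuot.mkAlgHom 𝕜 (blobRel 𝕜 (n := n) κ) (Eg 𝕜 i)

/-- `κ` is an adjacency-free bicharge: `κ₁ ∉ {κ₂, κ₂+1, κ₂-1}`. -/
def AdjFree (κ : ZMod e × ZMod e) : Prop :=
  κ.1 ≠ κ.2 ∧ κ.1 ≠ κ.2 + 1 ∧ κ.1 ≠ κ.2 - 1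

/-! ### Combinatorics of one-column bipartitions and standard tableaux -/

/-- A standard tableau of a one-column bipartition of `n`, encoded by its
column word: entry `j+1` (for `j : Fin n`) lies in column `t j` (column `0`
is the first column, column `1` the second).  The shape is recovered from
the column counts, and standardness is automatic in this encoding. -/
abbrev StdTab (n : ℕ) := Fin n → Fin 2

/-- The (1-based) row in which the `(j+1)`-st entry of `t` sits. -/
def rowOf (t : StdTab n) (j : Fin n) : ℕ :=
  Set.ncard {j' : Fin n | j' ≤ j ∧ t j' = t j}

/-- The residue sequence `i^t` of a standard tableau: the residue of the box
`(r, m)` is `κ_m + 1 - r`. -/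
def resOf (κ : ZMod e × ZMod e) (t : StdTab n) : Fin n → ZMod e :=
  fun j => (if t j = 0 then κ.1 else κ.2) + 1 - (rowOf t j : ZMod e)

/-- The classical weight `λ₁ - λ₂` of (the shape of) a standard tableau. -/
def cwt (t : StdTab n) : ℤ :=
  (Set.ncard {j : Fin n | t j = 0} : ℤ) - (Set.ncard {j : Fin n | t j = 1} : ℤ)

/-- The dominant standard tableau `t^λ` of the shape `λ = (1^{l1}, 1^{n-l1})`:
entries are placed left-to-right along each row, top row to bottom row. -/
def domCol (n l1 : ℕ) : StdTab n := fun p =>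
  if (p : ℕ) + 1 ≤ 2 * min l1 (n - l1) then (if ((p : ℕ) + 1) % 2 = 1 then 0 else 1)
  else (if n - l1 ≤ l1 then 0 else 1)

/-- The dominant standard tableau of the shape with classical weight `x`. -/
def domOfWt (n : ℕ) (x : ℤ) : StdTab n := domCol n (((n : ℤ) + x) / 2).toNat

/-- The path `p_t` associated to a standard tableau. -/
def pathOf (t : StdTab n) (j : ℕ) : ℤ :=
  (Set.ncard {j' : Fin n | (j' : ℕ) < j ∧ t j' = 0} : ℤ)
    - (Set.ncard {j' : Fin n | (j' : ℕ) < j ∧ t j' = 1} : ℤ)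

/-- `c`: the smallest positive integer congruent to `κ₁ - κ₂` modulo `e`. -/
def cWall (e : ℕ) (κ : ZMod e × ZMod e) : ℕ :=
  if (κ.1 - κ.2).val = 0 then e else (κ.1 - κ.2).val

/-- The walls are the integers `c + k·e`, `k ∈ ℤ`. -/
def IsWall (c e : ℕ) (x : ℤ) : Prop := ∃ k : ℤ, x = (c : ℤ) + k * (e : ℤ)

/-- The path of `t` performs a wall-to-wall step starting at time `j`. -/
def WallToWallAt (c e : ℕ) (t : StdTab n) (j : ℕ) : Prop :=
  j + e ≤ n ∧ IsWall c e (pathOf t j) ∧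
    ((∀ a < e, pathOf t (j + a + 1) = pathOf t (j + a) + 1) ∨
     (∀ a < e, pathOf t (j + a + 1) = pathOf t (j + a) - 1))

/-- The path of `t` performs a wall-to-wall step across the fundamental alcove
(whose walls are `c - e` and `c`) starting at time `j`. -/
def CrossesFundAt (c e : ℕ) (t : StdTab n) (j : ℕ) : Prop :=
  WallToWallAt c e t j ∧
    ((pathOf t j = (c : ℤ) ∧ pathOf t (j + e) = (c : ℤ) - (e : ℤ)) ∨
     (pathOf t j = (c : ℤ) - (e : ℤ) ∧ pathOf t (j + e) = (c : ℤ)))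

/-- `w(t)`: the number of wall-to-wall steps of `p_t` across the fundamental
alcove. -/
def wNum (c e : ℕ) (t : StdTab n) : ℕ := Set.ncard {j : ℕ | CrossesFundAt c e t j}

/-- The time at which the last wall-to-wall step of `p_t` ends. -/
def lastWW (c e : ℕ) (t : StdTab n) : ℕ :=
  sSup {j' : ℕ | ∃ j, WallToWallAt c e t j ∧ j' = j + e}

/-- `δ(t) = 1` if the first step after all wall-to-wall steps points toward
the origin, and `0` otherwise. -/
def deltaNum (c e : ℕ) (t : StdTab n) : ℕ := by
  classical
  exact if lastWW c e t + 1 ≤ n ∧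
      |pathOf t (lastWW c e t + 1)| < |pathOf t (lastWW c e t)| then 1 else 0

/-- The degree of a standard tableau: `deg t = w(t) + δ(t)`. -/
def degTab (c e : ℕ) (t : StdTab n) : ℕ := wNum c e t + deltaNum c e t

/-- The reflection of `ℤ` about the wall `c + k·e`. -/
def reflWall (c e : ℕ) (k : ℤ) : Equiv.Perm ℤ :=
  Function.Involutive.toPerm (fun x => 2 * ((c : ℤ) + k * (e : ℤ)) - x)
    (fun x => by show 2 * ((c : ℤ) + k * (e : ℤ)) - (2 * ((c : ℤ) + k * (e : ℤ)) - x) = x; ring)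

/-- The infinite dihedral group `W` generated by the reflections about the
walls. -/
def dihedralW (c e : ℕ) : Subgroup (Equiv.Perm ℤ) :=
  Subgroup.closure {g | ∃ k : ℤ, g = reflWall c e k}

/-- Two (classical) weights are linked if they lie in the same `W`-orbit. -/
def Linked (c e : ℕ) (x y : ℤ) : Prop := ∃ g ∈ dihedralW c e, g x = y

/-- A weight is regular if it is not a wall. -/
def Regular (c e : ℕ) (x : ℤ) : Prop := ¬ IsWall c e x

/-- `ℓ(w_λ)`: the number of walls strictly between the weight `x` and the
fundamental alcove (the alcove of integers strictly between `c - e` and `c`). -/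
def ellW (c e : ℕ) (x : ℤ) : ℕ :=
  Set.ncard {w : ℤ | IsWall c e w ∧
    (((c : ℤ) - 1 < w ∧ w < x) ∨ (x < w ∧ w < (c : ℤ) - (e : ℤ) + 1))}

/-- The labelling `λ₀, λ₁, λ₂, …` of the linkage class of a singular weight
`x0` (as a list of the first `k+1` weights): for `x0 ≥ 0` and `k` even, the
next weight `λ_{k+1}` is the linked weight in `Λ(n)`, distinct from the
previous ones, with largest classical weight, and for `k` odd the one with
the smallest classical weight; for `x0 < 0` largest/smallest are swapped. -/
def singList (c e n : ℕ) (x0 : ℤ) : ℕ → List ℤ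
  | 0 => [x0]
  | k + 1 =>
      let L := singList c e n x0 k
      let S : Set ℤ := {y | Linked c e x0 y ∧ -(n : ℤ) ≤ y ∧ y ≤ (n : ℤ) ∧ y ∉ L}
      L ++ [if 0 ≤ x0 then (if k % 2 = 0 then sSup S else sInf S)
            else (if k % 2 = 0 then sInf S else sSup S)]

/-- The classical weight of `λ_k` in the singular labelling starting at `x0`. -/
def singWt (c e n : ℕ) (x0 : ℤ) (k : ℕ) : ℤ := (singList c e n x0 k).getLastD 0

/-! ### Words, permutations and cellular basis elements -/

/-- `ψ_w` for a word `w = [r₁, …, r_l]`: the product `ψ_{r₁} ⋯ ψ_{r_l}`. -/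
def psiWord (w : List ℕ) : BA 𝕜 n e κ := (w.map (bpsi 𝕜 κ)).prod

/-- The cellular element `ψ_{s,t} = ψ_{d_s} · e(i) · (ψ_{d_t})⁻` built from
reduced words `ws`, `wt` for `d_s`, `d_t` (the anti-involution fixes the
`ψ`-generators and reverses products, so `(ψ_{d_t})⁻ = ψ_{reverse wt}`). -/
def cellElt (ws wt : List ℕ) (i : Fin n → ZMod e) : BA 𝕜 n e κ :=
  psiWord 𝕜 κ ws * bE 𝕜 κ i * psiWord 𝕜 κ wt.reverse

/-- The simple transposition `s_r = (r, r+1)` (1-based) as a permutation of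
`Fin n`. -/
def sPerm (n : ℕ) (r : ℕ) : Equiv.Perm (Fin n) :=
  if h : 1 ≤ r ∧ r < n then Equiv.swap ⟨r - 1, by omega⟩ ⟨r, h.2⟩ else 1

/-- The permutation `s_{r₁} ⋯ s_{r_l}` of a word `[r₁, …, r_l]`. -/
def permOfWord (n : ℕ) (w : List ℕ) : Equiv.Perm (Fin n) := (w.map (sPerm n)).prod

/-- `w` is a reduced expression for the permutation `d`. -/
def IsReducedWord (n : ℕ) (d : Equiv.Perm (Fin n)) (w : List ℕ) : Prop :=
  (∀ r ∈ w, 1 ≤ r ∧ r < n) ∧ permOfWord n w = d ∧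
    ∀ w' : List ℕ, (∀ r ∈ w', 1 ≤ r ∧ r < n) → permOfWord n w' = d →
      w.length ≤ w'.length

/-- `d = d_t` is the permutation with `d_t · t^λ = t`, where `tdom = t^λ`:
the entry `d(p)` of `t` occupies the same box as the entry `p` of `tdom`. -/
def IsDTabPerm (tdom t : StdTab n) (d : Equiv.Perm (Fin n)) : Prop :=
  ∀ p : Fin n, t (d p) = tdom p ∧ rowOf t (d p) = rowOf tdom p

/-- `w` is a reduced expression for `d_t` (relative to the dominant tableau
`tdom` of the same shape). -/
def IsRedWordForTab (tdom t : StdTab n) (w : List ℕ) : Prop :=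
  ∃ d : Equiv.Perm (Fin n), IsDTabPerm tdom t d ∧ IsReducedWord n d w

/-- `t ∈ Std_λ(μ)`: `t` is a standard tableau of the shape with classical
weight `xm` whose residue sequence is `i^λ`, where `λ` has classical weight
`xl`. -/
def MemStd (κ : ZMod e × ZMod e) (xl xm : ℤ) (t : StdTab n) : Prop :=
  cwt t = xm ∧ resOf κ t = resOf κ (domOfWt n xl)

/-- `t` is a tableau of maximal degree in `Std_λ(μ)`. -/
def IsMaxTab (κ : ZMod e × ZMod e) (xl xm : ℤ) (t : StdTab n) : Prop :=
  MemStd κ xl xm t ∧ ∀ s : StdTab n, MemStd κ xl xm s →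
    degTab (cWall e κ) e s ≤ degTab (cWall e κ) e t

/-! ### Diamonds -/

/-- One layer of a diamond: `ψ_{f-a} ψ_{f-a+2} ⋯ ψ_{f+a}`. -/
def layerElt (f a : ℕ) : BA 𝕜 n e κ :=
  ((List.range (a + 1)).map (fun b => bpsi 𝕜 κ (f - a + 2 * b))).prod

/-- The diamond centred at position `f` with bottom idempotent `e(i)`:
layers of `1, 2, …, e, …, 2, 1` `ψ`-generators centred at `f`. -/
def diamondAt (f : ℕ) (i : Fin n → ZMod e) : BA 𝕜 n e κ :=
  ((List.range e).map (layerElt 𝕜 κ f)).prod *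
    ((List.range (e - 1)).reverse.map (layerElt 𝕜 κ f)).prod * bE 𝕜 κ i

/-- The smallest positive integer congruent to `a` modulo `e`. -/
def posRep (e : ℕ) (a : ℤ) : ℕ :=
  if (a % (e : ℤ)).toNat = 0 then e else (a % (e : ℤ)).toNat

/-- `f_λ` for the weight `λ = (1^{l1}, 1^{l2})`. -/
def fWt (c e : ℕ) (l1 l2 : ℕ) : ℕ :=
  if l2 ≤ l1 then posRep e (2 * (l2 : ℤ) + (c : ℤ)) else posRep e (2 * (l1 : ℤ) - (c : ℤ))

/-- The diamond `U^λ_j` of the weight `λ = (1^{l1}, 1^{l2})` (with `l1+l2 = n`). -/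
def diamondU (𝕜 : Type) [Field 𝕜] {e : ℕ} (κ : ZMod e × ZMod e) (n l1 l2 j : ℕ) :
    BA 𝕜 n e κ :=
  diamondAt 𝕜 κ (fWt (cWall e κ) e l1 l2 + j * e) (resOf κ (domCol n l1))

/-! ### The setting of `η` -/

/-- The classical weight of `η_k` (in the setting `η = (1ⁿ, ∅)`, `n ≡ c (mod e)`). -/
def etaWt (c e n : ℕ) (k : ℕ) : ℤ := singWt c e n (n : ℤ) k

/-- The residue sequence `i^{η_k}`. -/
def etaRes {e : ℕ} (κ : ZMod e × ZMod e) (n k : ℕ) : Fin n → ZMod e :=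
  resOf κ (domOfWt n (etaWt (cWall e κ) e n k))

/-- The diamond `U^η_j`, centred at position `f_η + j·e = c + j·e`. -/
def Ueta (𝕜 : Type) [Field 𝕜] {e : ℕ} (κ : ZMod e × ZMod e) (n j : ℕ) : BA 𝕜 n e κ :=
  diamondAt 𝕜 κ (cWall e κ + j * e) (etaRes κ n 0)

/-- `U^η_{r,s} = U^η_r U^η_{r+1} ⋯ U^η_s`. -/
def UetaSeq (𝕜 : Type) [Field 𝕜] {e : ℕ} (κ : ZMod e × ZMod e) (n r s : ℕ) :
    BA 𝕜 n e κ :=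
  ((List.range (s + 1 - r)).map (fun a => Ueta 𝕜 κ n (r + a))).prod

end Blob
namespace Blob

/-! ### Column counts, paths and residues -/

/-- The number of entries `≤ j` in column `v` of `t`. -/
def colCount {n : ℕ} (t : StdTab n) (v : Fin 2) (j : ℕ) : ℕ :=
  Set.ncard {j' : Fin n | (j' : ℕ) < j ∧ t j' = v}

lemma colCount_zero {n : ℕ} (t : StdTab n) (v : Fin 2) : colCount t v 0 = 0 := by
  simp [colCount]

lemma colCount_succ {n : ℕ} (t : StdTab n) (v : Fin 2) {j : ℕ} (h : j < n) :
    colCount t v (j + 1) = colCount t v j + if t ⟨j, h⟩ = v then 1 else 0 := by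
  unfold colCount
  split_ifs with hv
  · have : {j' : Fin n | (j' : ℕ) < j + 1 ∧ t j' = v}
        = insert ⟨j, h⟩ {j' : Fin n | (j' : ℕ) < j ∧ t j' = v} := by
      ext x
      simp only [Set.mem_ofPred_eq, Set.mem_insert_iff, Fin.ext_iff]
      constructor
      · rintro ⟨h1, h2⟩
        by_cases hx : (x : ℕ) = j
        · exact Or.inl hx
        · exact Or.inr ⟨by omega, h2⟩
      · rintro (h1 | ⟨h1, h2⟩)
        · have : x = ⟨j, h⟩ := Fin.ext h1
          subst this
          exact ⟨by simp, congrArg Fin.val hv⟩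
        · exact ⟨by omega, h2⟩
    rw [this, Set.ncard_insert_of_notMem (by simp) (Set.toFinite _)]
  · rw [add_zero]
    congr 1
    ext x
    simp only [Set.mem_ofPred_eq]
    constructor
    · rintro ⟨h1, h2⟩
      refine ⟨?_, h2⟩
      by_contra hx
      have : x = ⟨j, h⟩ := Fin.ext (by simp; omega)
      exact hv (this ▸ h2)
    · rintro ⟨h1, h2⟩
      exact ⟨by omega, h2⟩

lemma colCount_add {n : ℕ} (t : StdTab n) {j : ℕ} (h : j ≤ n) :
    colCount t 0 j + colCount t 1 j = j := by
  induction j with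
  | zero => simp [colCount_zero]
  | succ j ih =>
    have hj : j < n := h
    rw [colCount_succ t 0 hj, colCount_succ t 1 hj]
    have := ih hj.le
    have h2 : t ⟨j, hj⟩ = 0 ∨ t ⟨j, hj⟩ = 1 := by
      generalize t ⟨j, hj⟩ = v
      fin_cases v <;> simp
    rcases h2 with h2 | h2 <;> simp [h2] <;> omega

lemma pathOf_eq {n : ℕ} (t : StdTab n) (j : ℕ) :
    pathOf t j = (colCount t 0 j : ℤ) - colCount t 1 j := rfl

lemma pathOf_zero {n : ℕ} (t : StdTab n) : pathOf t 0 = 0 := by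
  simp [pathOf_eq, colCount_zero]

lemma pathOf_succ {n : ℕ} (t : StdTab n) {j : ℕ} (h : j < n) :
    pathOf t (j + 1) = pathOf t j + if t ⟨j, h⟩ = 0 then 1 else -1 := by
  rw [pathOf_eq, pathOf_eq, colCount_succ t 0 h, colCount_succ t 1 h]
  have h2 : t ⟨j, h⟩ = 0 ∨ t ⟨j, h⟩ = 1 := by
    generalize t ⟨j, h⟩ = v
    fin_cases v <;> simp
  rcases h2 with h2 | h2 <;> simp [h2] <;> ring

lemma pathOf_last {n : ℕ} (t : StdTab n) : pathOf t n = cwt t := by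
  simp [pathOf, cwt]

lemma rowOf_eq {n : ℕ} (t : StdTab n) {j : ℕ} (h : j < n) :
    rowOf t ⟨j, h⟩ = colCount t (t ⟨j, h⟩) j + 1 := by
  have h1 : rowOf t ⟨j, h⟩ = colCount t (t ⟨j, h⟩) (j + 1) := by
    unfold rowOf colCount
    congr 1
    ext x
    simp only [Set.mem_ofPred_eq, Fin.le_def]
    constructor <;> rintro ⟨h1, h2⟩ <;> exact ⟨by omega, h2⟩
  rw [h1, colCount_succ t _ h]
  simp

lemma cWall_spec {e : ℕ} (he : 4 ≤ e) (κ : ZMod e × ZMod e) (hκ : AdjFree κ) :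
    2 ≤ cWall e κ ∧ cWall e κ + 2 ≤ e ∧ ((cWall e κ : ℕ) : ZMod e) = κ.1 - κ.2 := by
  have : NeZero e := ⟨by omega⟩
  obtain ⟨k0, k1, k2⟩ := hκ
  have hlt := ZMod.val_lt (κ.1 - κ.2)
  have hcast : (((κ.1 - κ.2).val : ℕ) : ZMod e) = κ.1 - κ.2 := ZMod.natCast_zmod_val _
  have h0 : (κ.1 - κ.2).val ≠ 0 := by
    intro h
    rw [h, Nat.cast_zero] at hcast
    exact k0 (by linear_combination -hcast)
  have h1 : (κ.1 - κ.2).val ≠ 1 := by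
    intro h
    rw [h, Nat.cast_one] at hcast
    exact k1 (by linear_combination -hcast)
  have h2 : (κ.1 - κ.2).val + 1 ≠ e := by
    intro h
    have h3 : (((κ.1 - κ.2).val + 1 : ℕ) : ZMod e) = 0 := by
      rw [h]; exact ZMod.natCast_self e
    rw [Nat.cast_add, hcast, Nat.cast_one] at h3
    exact k2 (by linear_combination h3)
  have hc : cWall e κ = (κ.1 - κ.2).val := by simp [cWall, h0]
  rw [hc]
  exact ⟨by omega, by omega, hcast⟩

lemma isWall_iff (c e : ℕ) (x : ℤ) : IsWall c e x ↔ (x : ZMod e) = (c : ZMod e) := by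
  have h := ZMod.intCast_eq_intCast_iff_dvd_sub (c : ℤ) x e
  rw [Int.cast_natCast] at h
  rw [eq_comm, h]
  constructor
  · rintro ⟨k, rfl⟩
    exact ⟨k, by ring⟩
  · rintro ⟨k, hk⟩
    exact ⟨k, by linear_combination hk⟩

/-- Two paths with the same residue sequence meet walls at the same times: equal residues at
step `j + 1` force the positions at time `j` to be congruent modulo `e`, or to be reflections of
each other about a wall. -/
lemma wall_transfer {n e : ℕ} (he : 4 ≤ e) (κ : ZMod e × ZMod e) (hκ : AdjFree κ)
    (s t : StdTab n) (hres : resOf κ t = resOf κ s) {j : ℕ} (hj : j < n)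
    (hw : IsWall (cWall e κ) e (pathOf t j)) : IsWall (cWall e κ) e (pathOf s j) := by
  rw [isWall_iff, (cWall_spec he κ hκ).2.2, pathOf_eq] at hw ⊢
  push_cast at hw ⊢
  have ht := congrArg (Nat.cast : ℕ → ZMod e) (colCount_add t hj.le)
  have hs := congrArg (Nat.cast : ℕ → ZMod e) (colCount_add s hj.le)
  push_cast at ht hs
  have hr := congrFun hres ⟨j, hj⟩
  simp only [resOf, rowOf_eq] at hr
  have h2 : ∀ v : Fin 2, v = 0 ∨ v = 1 := by
    intro v
    fin_cases v <;> simp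
  rcases h2 (t ⟨j, hj⟩) with h3 | h3 <;> rcases h2 (s ⟨j, hj⟩) with h4 | h4 <;>
    simp [h3, h4] at hr
  · linear_combination hw - 2 * hr - hs + ht
  · linear_combination -hw - 2 * hr + hs - ht
  · linear_combination -hw + 2 * hr - hs + ht
  · linear_combination hw + 2 * hr + hs - ht

/-! ### The path of the dominant tableau -/

lemma domCol_path {a1 a2 j : ℕ} (h : j ≤ a1 + a2) :
    pathOf (domCol (a1 + a2) a1) j =
      if j ≤ 2 * min a1 a2 then ((j % 2 : ℕ) : ℤ)
      else if a2 ≤ a1 then (j : ℤ) - 2 * (min a1 a2 : ℕ) else 2 * (min a1 a2 : ℕ) - (j : ℤ) := by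
  induction j with
  | zero => simp [pathOf_zero]
  | succ j ih =>
    rw [pathOf_succ _ h, ih (by omega)]
    simp only [domCol, Nat.add_sub_cancel_left]
    generalize hm : min a1 a2 = m
    split_ifs <;> simp_all <;> omega

lemma domCol_last (a1 a2 : ℕ) :
    pathOf (domCol (a1 + a2) a1) (a1 + a2) = (a1 : ℤ) - a2 := by
  rw [domCol_path le_rfl]
  split_ifs <;> omega

lemma domCol_step {a1 a2 j : ℕ} (h : j < a1 + a2) (x y : ℤ)
    (hx : x = pathOf (domCol (a1 + a2) a1) j) (hy : y = pathOf (domCol (a1 + a2) a1) (j + 1)) :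
    ((0 ≤ x ∧ x ≤ 1) ∧ (0 ≤ y ∧ y ≤ 1)) ∨ (0 ≤ x ∧ y = x + 1) ∨ (x ≤ 0 ∧ y = x - 1) := by
  rw [domCol_path h.le] at hx
  rw [domCol_path h] at hy
  split_ifs at hx hy <;> omega

/-! ### The wall count `ℓ` along a step -/

/-- The set of walls counted by `ellW`. -/
def wallSet (c e : ℕ) (x : ℤ) : Set ℤ :=
  {w : ℤ | IsWall c e w ∧
    (((c : ℤ) - 1 < w ∧ w < x) ∨ (x < w ∧ w < (c : ℤ) - (e : ℤ) + 1))}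

lemma ellW_eq (c e : ℕ) (x : ℤ) : ellW c e x = (wallSet c e x).ncard := rfl

lemma wallSet_finite (c e : ℕ) (x : ℤ) : (wallSet c e x).Finite := by
  refine (Set.finite_Icc (min ((c : ℤ) - 1) x) (max x ((c : ℤ) - e + 1))).subset ?_
  rintro w ⟨-, h | h⟩
  · exact ⟨by omega, by omega⟩
  · exact ⟨by omega, by omega⟩

lemma ellW_fund {c e : ℕ} {x : ℤ} (h1 : (c : ℤ) - e ≤ x) (h2 : x ≤ c) : ellW c e x = 0 := by
  rw [ellW_eq, Set.ncard_eq_zero (wallSet_finite c e x)]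
  ext w
  simp only [wallSet, Set.mem_ofPred_eq, Set.mem_empty_iff_false, iff_false]
  rintro ⟨-, h | h⟩ <;> omega

lemma ellW_step_of_not_wall {c e : ℕ} {x y : ℤ} (hx : ¬ IsWall c e x)
    (hy : y = x + 1 ∨ y = x - 1) : ellW c e y ≤ ellW c e x := by
  refine Set.ncard_le_ncard ?_ (wallSet_finite c e x)
  rintro w ⟨hw, h⟩
  have : w ≠ x := fun hh => hx (hh ▸ hw)
  exact ⟨hw, by omega⟩

lemma ellW_step {c e : ℕ} {x y : ℤ} (hy : y = x + 1 ∨ y = x - 1) :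
    ellW c e y ≤ ellW c e x + 1 := by
  refine le_trans (Set.ncard_le_ncard (t := insert x (wallSet c e x)) ?_
    ((wallSet_finite c e x).insert x)) (Set.ncard_insert_le _ _)
  rintro w ⟨hw, h⟩
  by_cases hh : w = x
  · exact Or.inl hh
  · exact Or.inr ⟨hw, by omega⟩

/-- A step of the dominant path does not decrease `ℓ`, and increases it when it starts at a
wall. -/
lemma ellW_dom_step {c e : ℕ} (hc : 2 ≤ c) (hce : c + 2 ≤ e) {x y : ℤ}
    (h : ((0 ≤ x ∧ x ≤ 1) ∧ (0 ≤ y ∧ y ≤ 1)) ∨ (0 ≤ x ∧ y = x + 1) ∨ (x ≤ 0 ∧ y = x - 1)) :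
    ellW c e x ≤ ellW c e y ∧ (IsWall c e x → ellW c e x + 1 ≤ ellW c e y) := by
  have hout : ∀ z : ℤ, IsWall c e z → c ≤ z ∨ z ≤ (c : ℤ) - e := by
    rintro z ⟨k, rfl⟩
    rcases le_or_gt 0 k with hk | hk
    · left; nlinarith
    · right; nlinarith
  by_cases hin : (c : ℤ) - e < x ∧ x < c
  · rw [ellW_fund hin.1.le hin.2.le]
    refine ⟨Nat.zero_le _, fun hw => ?_⟩
    have := hout x hw
    omega
  · have hsub : wallSet c e x ⊆ wallSet c e y := by
      rintro w ⟨hw, h'⟩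
      exact ⟨hw, by omega⟩
    refine ⟨Set.ncard_le_ncard hsub (wallSet_finite c e y), fun hw => ?_⟩
    have hx : x ∉ wallSet c e x := by
      rintro ⟨-, h'⟩
      omega
    rw [ellW_eq, ellW_eq, ← Set.ncard_insert_of_notMem hx (wallSet_finite c e x)]
    refine Set.ncard_le_ncard (Set.insert_subset ⟨hw, ?_⟩ hsub) (wallSet_finite c e y)
    omega

/-! ### The potential argument -/

/-- The number of wall-to-wall steps of `p_t` across the fundamental alcove that start before
time `j`. -/
def crossCount (c e : ℕ) {n : ℕ} (t : StdTab n) (j : ℕ) : ℕ :=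
  Set.ncard {i : ℕ | i < j ∧ CrossesFundAt c e t i}

lemma crossCount_last {c e n : ℕ} (he : 0 < e) (t : StdTab n) :
    crossCount c e t n = wNum c e t := by
  unfold crossCount wNum
  congr 1
  ext i
  simp only [Set.mem_ofPred_eq, and_iff_right_iff_imp]
  intro h
  have := h.1.1
  omega

lemma crossCount_succ_le (c e : ℕ) {n : ℕ} (t : StdTab n) (j : ℕ) :
    crossCount c e t (j + 1) ≤ crossCount c e t j + 1 := by
  have hfin : {i : ℕ | i < j ∧ CrossesFundAt c e t i}.Finite :=
    (Set.finite_Iio j).subset fun i hi => hi.1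
  refine le_trans (Set.ncard_le_ncard
    (t := insert j {i : ℕ | i < j ∧ CrossesFundAt c e t i}) ?_ (hfin.insert j))
    (Set.ncard_insert_le _ _)
  rintro i ⟨h1, h2⟩
  by_cases hh : i = j
  · exact Or.inl hh
  · exact Or.inr ⟨by omega, h2⟩

lemma crossCount_succ_of_not {c e n : ℕ} (t : StdTab n) {j : ℕ}
    (h : ¬ CrossesFundAt c e t j) : crossCount c e t (j + 1) ≤ crossCount c e t j := by
  refine Set.ncard_le_ncard ?_ ((Set.finite_Iio j).subset fun i hi => hi.1)
  rintro i ⟨h1, h2⟩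
  have : i ≠ j := fun hh => h (hh ▸ h2)
  exact ⟨by omega, h2⟩

/-- The first step of a crossing of the fundamental alcove stays in the closed alcove. -/
lemma ellW_of_crosses {c e n : ℕ} (he : 0 < e) (t : StdTab n) {j : ℕ}
    (h : CrossesFundAt c e t j) :
    ellW c e (pathOf t (j + 1)) = 0 := by
  obtain ⟨⟨-, -, hdir⟩, hpos⟩ := h
  -- The whole step is determined by its direction; the endpoints rule out the outward one.
  have key : ∀ ε : ℤ, (∀ a < e, pathOf t (j + a + 1) = pathOf t (j + a) + ε) →
      ∀ a ≤ e, pathOf t (j + a) = pathOf t j + a * ε := by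
    intro ε hε a
    induction a with
    | zero => simp
    | succ a ih =>
      intro ha
      rw [← add_assoc, hε a ha, ih (by omega)]
      push_cast
      ring
  rcases hdir with hd | hd
  · have h1 := key 1 hd 1 he
    have h2 := key 1 hd e le_rfl
    rcases hpos with ⟨h3, h4⟩ | ⟨h3, h4⟩
    · omega
    · apply ellW_fund <;> omega
  · have h1 := key (-1) hd 1 he
    have h2 := key (-1) hd e le_rfl
    rcases hpos with ⟨h3, h4⟩ | ⟨h3, h4⟩
    · apply ellW_fund <;> omega
    · omega

lemma potential_le {e a1 a2 : ℕ} (he : 4 ≤ e) (κ : ZMod e × ZMod e) (hκ : AdjFree κ)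
    (t : StdTab (a1 + a2)) (hres : resOf κ t = resOf κ (domCol (a1 + a2) a1))
    {j : ℕ} (hj : j ≤ a1 + a2) :
    ellW (cWall e κ) e (pathOf t j) + crossCount (cWall e κ) e t j
      ≤ ellW (cWall e κ) e (pathOf (domCol (a1 + a2) a1) j) := by
  obtain ⟨hc, hce, -⟩ := cWall_spec he κ hκ
  induction j with
  | zero =>
    rw [pathOf_zero, pathOf_zero]
    simp [crossCount]
  | succ j ih =>
    have ih' := ih (by omega)
    have hs := ellW_dom_step hc hce (domCol_step (show j < a1 + a2 from hj) _ _ rfl rfl)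
    have hstep : pathOf t (j + 1) = pathOf t j + 1 ∨ pathOf t (j + 1) = pathOf t j - 1 := by
      rw [pathOf_succ t hj]
      split_ifs
      · exact Or.inl rfl
      · exact Or.inr rfl
    by_cases hw : IsWall (cWall e κ) e (pathOf t j)
    · have hs' := hs.2 (wall_transfer he κ hκ _ t hres hj hw)
      by_cases hx : CrossesFundAt (cWall e κ) e t j
      · have h1 := ellW_of_crosses (by omega) t hx
        have h2 := crossCount_succ_le (cWall e κ) e t j
        omega
      · have h1 := ellW_step (c := cWall e κ) (e := e) hstep
        have h2 := crossCount_succ_of_not t hx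
        omega
    · have h1 := ellW_step_of_not_wall hw hstep
      have h2 := crossCount_succ_of_not t (fun hx => hw hx.1.2.1)
      have h3 := hs.1
      omega

/-- For linked regular weights `λ ⊴ μ` in `Λ(n)`, every
`t ∈ Std_λ(μ)` satisfies `w(t) ≤ ℓ(w_λ) - ℓ(w_μ)` and hence
`deg t ≤ ℓ(w_λ) - ℓ(w_μ) + 1`. -/
theorem statement18 (n e : ℕ) (hn : 1 ≤ n) (he : 4 ≤ e)
    (κ : ZMod e × ZMod e) (hκ : AdjFree κ)
    (a1 a2 b1 b2 : ℕ) (ha : a1 + a2 = n) (hb : b1 + b2 = n)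
    (hrega : Regular (cWall e κ) e ((a1 : ℤ) - a2))
    (hregb : Regular (cWall e κ) e ((b1 : ℤ) - b2))
    (hlink : Linked (cWall e κ) e ((a1 : ℤ) - a2) ((b1 : ℤ) - b2))
    (hdom : (a1 : ℤ) - a2 = (b1 : ℤ) - b2 ∨ |(b1 : ℤ) - b2| < |(a1 : ℤ) - a2|) :
    ∀ t : StdTab n, MemStd κ ((a1 : ℤ) - a2) ((b1 : ℤ) - b2) t →
      (wNum (cWall e κ) e t : ℤ) ≤
          (ellW (cWall e κ) e ((a1 : ℤ) - a2) : ℤ) -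
            (ellW (cWall e κ) e ((b1 : ℤ) - b2) : ℤ) ∧
      (degTab (cWall e κ) e t : ℤ) ≤
          (ellW (cWall e κ) e ((a1 : ℤ) - a2) : ℤ) -
            (ellW (cWall e κ) e ((b1 : ℤ) - b2) : ℤ) + 1 := by
  intro t ht
  subst ha
  obtain ⟨hcwt, hres⟩ := ht
  have hdomwt : domOfWt (a1 + a2) ((a1 : ℤ) - a2) = domCol (a1 + a2) a1 := by
    unfold domOfWt
    congr 1
    omega
  rw [hdomwt] at hres
  have h := potential_le he κ hκ t hres le_rfl
  rw [domCol_last, pathOf_last, hcwt, crossCount_last (by omega)] at h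
  have hδ : deltaNum (cWall e κ) e t ≤ 1 := by
    unfold deltaNum
    split_ifs <;> omega
  unfold degTab
  omega

end Blob
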